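/- arXiv:math/0111189 — 2 statements merged into one kernel-verified Lean document; each statement's English description precedes it below -/
import Mathlib

section
/- Let A and B be C*-algebras, let e ∈ A and f ∈ B be projections, and set I = {a * e : a ∈ A} and J = {b * f : b ∈ B}. Suppose φ : I → J is a bijective linear map which is completely isometric. Then the element u := φ(e) satisfies: (1) u* * u = f, and u * u* is a projection in B (so u is a partial isometry with initial projection f); (2) the map π : I → B defined by π(x) = φ(x) * u* is multiplicative (π(x * y) = π(x) * π(y) for all x, y ∈ I), is completely isometric, and its range equals {b * u* : b ∈ B} = {b * (u * u*) : b ∈ B}, which is a norm-closed left ideal of B admitting u * u* as a right identity; (3) φ(x) = π(x) * u for every x ∈ I. -/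
open Filter Topology

/-- The canonical C*-norm of an `n × n` matrix over a (possibly non-unital) C*-algebra `A`:
the operator norm of left multiplication on the Hilbert `A`-module of columns `Aⁿ`. -/
noncomputable def cnorm {A : Type*} [NonUnitalCStarAlgebra A] {n : ℕ}
    (x : Matrix (Fin n) (Fin n) A) : ℝ :=
  sSup {r : ℝ | ∃ v : Fin n → A, ‖∑ i, star (v i) * v i‖ ≤ 1 ∧
    r = Real.sqrt ‖∑ i, star (x.mulVec v i) * (x.mulVec v i)‖}

/-- A map `T` defined on a subspace `V` of a C*-algebra `A`, with values in a C*-algebra `B`,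
is completely isometric if for every `n`, applying `T` entrywise to `n × n` matrices with
entries in `V` preserves the canonical C*-norm of matrices. -/
def IsCompletelyIsometric {A B : Type*} [NonUnitalCStarAlgebra A] [NonUnitalCStarAlgebra B]
    {V : Submodule ℂ A} (T : V → B) : Prop :=
  ∀ (n : ℕ) (x : Matrix (Fin n) (Fin n) V),
    cnorm (x.map T) = cnorm (x.map ((↑) : V → A))

/-- The left ideal `{a * e : a ∈ A}` of a C*-algebra `A`, as a `ℂ`-submodule. -/
def principalLeftIdeal (A : Type*) [NonUnitalCStarAlgebra A] (e : A) : Submodule ℂ A where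
  carrier := {x | ∃ a : A, x = a * e}
  add_mem' := by rintro x y ⟨a, rfl⟩ ⟨b, rfl⟩; exact ⟨a + b, (add_mul a b e).symm⟩
  zero_mem' := ⟨0, (zero_mul e).symm⟩
  smul_mem' := by rintro c x ⟨a, rfl⟩; exact ⟨c • a, (smul_mul_assoc c a e).symm⟩

/-!
The norm of a column with entries `x`, `y` is `‖x* x + y* y‖ ^ (1/2)`, and in `B f` these norms
determine the order between the squares `x* x`. Hence `φ` preserves that order. As `e` and `f` are
the largest squares of contractions in `A e` and `B f`, this gives `u* u = f`. A unitary `c` of the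
unitization of `A` preserves squares, so `φ(c x)* φ(c y) = φ(x)* φ(y)` by polarization; unitaries
span, so `φ(a x)* φ(y) = φ(x)* φ(a* y)` for all `a`. Applied to `φ⁻¹` with `w = φ⁻¹(f)`, this
adjoint relation yields `φ(x y) = φ(x) φ(w y)`, and then, since `φ(e y) = u φ(w y)`,
`φ(x) u* φ(y) = φ(x) u* φ(e y) = φ(x) f φ(w y) = φ(x y)`.
-/

section StarAlgebra

variable {B : Type*} [NonUnitalRing B] [StarRing B] [Module ℂ B] [StarModule ℂ B]
  [IsScalarTower ℂ B B] [SMulCommClass ℂ B B]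

theorem four_smul_star_mul_eq (a b : B) :
    (4 : ℂ) • (star a * b) =
      star (a + b) * (a + b) - star (a - b) * (a - b)
        - Complex.I • (star (a + Complex.I • b) * (a + Complex.I • b))
        + Complex.I • (star (a - Complex.I • b) * (a - Complex.I • b)) := by
  simp only [star_add, star_sub, star_smul, Complex.star_def, Complex.conj_I, add_mul, mul_add,
    sub_mul, mul_sub, smul_mul_assoc, mul_smul_comm, smul_add, smul_sub, smul_smul, mul_neg,
    Complex.I_mul_I]
  module

theorem star_map_mul_map_eq_of_star_mul_self_eq {V : Type*} [AddCommGroup V] [Module ℂ V]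
    {S T : V →ₗ[ℂ] B} (h : ∀ x, star (S x) * S x = star (T x) * T x) (x y : V) :
    star (S x) * S y = star (T x) * T y := by
  have four_ne_zero : (4 : ℂ) ≠ 0 := by norm_num
  refine smul_right_injective B four_ne_zero ?_
  simp only [four_smul_star_mul_eq, ← map_smul, ← map_add, ← map_sub, h]

end StarAlgebra

theorem isStarProjection_mul_star {R : Type*} [Semigroup R] [StarMul R] {u : R}
    (hu : u * star u * u = u) : IsStarProjection (u * star u) where
  isIdempotentElem := by rw [IsIdempotentElem, ← mul_assoc, hu]
  isSelfAdjoint := .mul_star_self u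

section CStarRing

variable {B : Type*} [NonUnitalNormedRing B] [StarRing B] [CStarRing B]

theorem mul_eq_self_of_star_mul_self_mul_eq {y f : B} (h : star y * y * f = star y * y) :
    y * f = y := by
  refine sub_eq_zero.1 ((CStarRing.star_mul_self_eq_zero_iff _).1 ?_)
  calc star (y * f - y) * (y * f - y)
      = star f * (star y * y * f - star y * y) - (star y * y * f - star y * y) := by
        simp only [star_sub, star_mul]
        noncomm_ring
    _ = 0 := by simp [h]

theorem eq_of_forall_star_mul_eq {V : AddSubgroup B} {x y : B} (hx : x ∈ V) (hy : y ∈ V)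
    (h : ∀ z ∈ V, star z * x = star z * y) : x = y := by
  refine sub_eq_zero.1 ((CStarRing.star_mul_self_eq_zero_iff _).1 ?_)
  rw [mul_sub, h _ (V.sub_mem hx hy), sub_self]

theorem norm_le_one_of_isStarProjection_star_mul_self {u : B}
    (hu : IsStarProjection (star u * u)) : ‖u‖ ≤ 1 := by
  have h := hu.norm_le
  rw [CStarRing.norm_star_mul_self] at h
  nlinarith [norm_nonneg u]

theorem mul_star_mul_self_of_isStarProjection_star_mul_self {u : B}
    (hu : IsStarProjection (star u * u)) : u * star u * u = u := by
  rw [mul_assoc]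
  exact mul_eq_self_of_star_mul_self_mul_eq hu.isIdempotentElem.eq

end CStarRing

section Order

variable {B : Type*} [NonUnitalCStarAlgebra B] [PartialOrder B] [StarOrderedRing B]

theorem le_smul_of_isStarProjection_of_norm_le {f q : B} (hf : IsStarProjection f)
    (hq : IsSelfAdjoint q) (hqf : q * f = q) {c : ℝ} (hc : ‖q‖ ≤ c) : q ≤ c • f := by
  have hfq : f * q = q := by simpa [hf.isSelfAdjoint.star_eq, hq.star_eq] using congr(star $hqf)
  calc q = star f * q * f := by rw [hf.isSelfAdjoint.star_eq, hfq, hqf]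
    _ ≤ ‖q‖ • (star f * f) := CStarAlgebra.star_left_conjugate_le_norm_smul
    _ = ‖q‖ • f := by rw [hf.isSelfAdjoint.star_eq, hf.isIdempotentElem.eq]
    _ ≤ c • f := smul_le_smul_of_nonneg_right hc hf.nonneg

theorem star_mul_self_le_of_isStarProjection {f x : B} (hf : IsStarProjection f)
    (hxf : x * f = x) (hx : ‖x‖ ≤ 1) : star x * x ≤ f := by
  have hnorm : ‖star x * x‖ ≤ 1 := by
    rw [CStarRing.norm_star_mul_self]
    exact mul_le_one₀ hx (norm_nonneg x) hx
  simpa using le_smul_of_isStarProjection_of_norm_le hf (.star_mul_self x)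
    (by rw [mul_assoc, hxf]) hnorm

theorem exists_star_mul_self_eq_of_mul_eq {f r : B} (hr : 0 ≤ r) (hrf : r * f = r) :
    ∃ y, y * f = y ∧ star y * y = r := by
  have hsqrt : star (CFC.sqrt r) * CFC.sqrt r = r := by
    rw [(CFC.sqrt_nonneg r).isSelfAdjoint.star_eq, CFC.sqrt_mul_sqrt_self r hr]
  exact ⟨CFC.sqrt r, mul_eq_self_of_star_mul_self_mul_eq (by rw [hsqrt, hrf]), hsqrt⟩

theorem star_mul_self_le_of_forall_norm_add_le {f x x' : B} (hf : IsStarProjection f)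
    (hx : x * f = x) (hx' : x' * f = x')
    (h : ∀ y, y * f = y → ‖star x * x + star y * y‖ ≤ ‖star x' * x' + star y * y‖) :
    star x * x ≤ star x' * x' := by
  set q := star x' * x' with hq
  have hqf : q * f = q := by rw [hq, mul_assoc, hx']
  have hq_le : q ≤ ‖q‖ • f :=
    le_smul_of_isStarProjection_of_norm_le hf (.star_mul_self x') hqf le_rfl
  -- Test the hypothesis against the `y` whose square completes `q` to a multiple of `f`.
  obtain ⟨y, hyf, hy⟩ : ∃ y, y * f = y ∧ star y * y = ‖q‖ • f - q :=
    exists_star_mul_self_eq_of_mul_eq (sub_nonneg.2 hq_le)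
      (by rw [sub_mul, smul_mul_assoc, hf.isIdempotentElem.eq, hqf])
  have hnorm : ‖star x * x + star y * y‖ ≤ ‖q‖ :=
    calc ‖star x * x + star y * y‖ ≤ ‖q + star y * y‖ := h y hyf
      _ = ‖q‖ * ‖f‖ := by rw [hy, add_sub_cancel, norm_smul, norm_norm]
      _ ≤ ‖q‖ := mul_le_of_le_one_right (norm_nonneg q) hf.norm_le
  have hle : star x * x + star y * y ≤ q + star y * y :=
    calc star x * x + star y * y ≤ ‖q‖ • f :=
          le_smul_of_isStarProjection_of_norm_le hf
            ((IsSelfAdjoint.star_mul_self x).add (.star_mul_self y))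
            (by rw [add_mul, mul_assoc, hx, mul_assoc, hyf]) hnorm
      _ = q + star y * y := by rw [hy, add_sub_cancel]
  exact le_of_add_le_add_right hle

end Order

namespace principalLeftIdeal

variable {A : Type*} [NonUnitalCStarAlgebra A] {e : A}

theorem mem_iff_mul_eq (he : IsIdempotentElem e) {x : A} :
    x ∈ principalLeftIdeal A e ↔ x * e = x := by
  constructor
  · rintro ⟨a, rfl⟩
    rw [mul_assoc, he.eq]
  · exact fun h => ⟨x, h.symm⟩

theorem coe_mul_eq (he : IsIdempotentElem e) (x : principalLeftIdeal A e) : (x : A) * e = x :=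
  (mem_iff_mul_eq he).1 x.2

theorem mul_mem (a : A) {x : A} (hx : x ∈ principalLeftIdeal A e) :
    a * x ∈ principalLeftIdeal A e := by
  obtain ⟨b, rfl⟩ := hx
  exact ⟨a * b, (mul_assoc a b e).symm⟩

theorem isClosed (he : IsIdempotentElem e) : IsClosed (principalLeftIdeal A e : Set A) := by
  have heq : (principalLeftIdeal A e : Set A) = {x | x * e = x} :=
    Set.ext fun _ => mem_iff_mul_eq he
  rw [heq]
  exact isClosed_eq (continuous_mul_const e) continuous_id

theorem star_eq_mul_star {u : A} (hu : u * star u * u = u) :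
    principalLeftIdeal A (star u) = principalLeftIdeal A (u * star u) := by
  ext y
  constructor
  · rintro ⟨b, rfl⟩
    have hstar : star u * (u * star u) = star u := by
      simpa [mul_assoc] using congr(star $hu)
    exact ⟨b * star u, by rw [mul_assoc, hstar]⟩
  · rintro ⟨b, rfl⟩
    exact ⟨b * u, (mul_assoc b u (star u)).symm⟩

/-- An idempotent `e`, as an element of the left ideal `A e` that it generates. -/
def generator (he : IsIdempotentElem e) : principalLeftIdeal A e := ⟨e, e, he.eq.symm⟩

variable (e) in
/-- The left regular representation of `A` on the left ideal `A e`, as a homomorphism into the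
algebra of linear endomorphisms so that it can be extended to the unitization of `A`. -/
def leftMul : A →ₙₐ[ℂ] Module.End ℂ (principalLeftIdeal A e) where
  toFun a := (LinearMap.mulLeft ℂ a).restrict fun _ => mul_mem a
  map_smul' c a := by ext x; exact smul_mul_assoc c a x
  map_zero' := by ext x; exact zero_mul _
  map_add' a b := by ext x; exact add_mul a b x
  map_mul' a b := by ext x; exact mul_assoc a b x

@[simp]
theorem coe_leftMul (a : A) (x : principalLeftIdeal A e) : (leftMul e a x : A) = a * x := rfl

theorem leftMul_generator (he : IsIdempotentElem e) (x : principalLeftIdeal A e) :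
    leftMul e x (generator he) = x :=
  Subtype.ext (coe_mul_eq he x)

theorem inr_lift_leftMul (c : Unitization ℂ A) (x : principalLeftIdeal A e) :
    ((Unitization.lift (leftMul e) c x : A) : Unitization ℂ A) = c * (x : A) := by
  induction c with
  | inl_add_inr r a => simp [add_mul, Algebra.algebraMap_eq_smul_one, Unitization.inl_mul_inr]

theorem star_mul_self_lift_leftMul {c : Unitization ℂ A} (hc : c ∈ unitary (Unitization ℂ A))
    (x : principalLeftIdeal A e) :
    star (Unitization.lift (leftMul e) c x : A) * (Unitization.lift (leftMul e) c x : A) =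
      star (x : A) * x := by
  apply Unitization.inr_injective (R := ℂ)
  simp only [Unitization.inr_mul, Unitization.inr_star, inr_lift_leftMul, star_mul]
  rw [mul_assoc, ← mul_assoc (star c), Unitary.star_mul_self_of_mem hc, one_mul]

variable {B : Type*} [NonUnitalCStarAlgebra B]

theorem star_map_lift_leftMul_mul_map {T : principalLeftIdeal A e →ₗ[ℂ] B}
    (hT : ∀ x y : principalLeftIdeal A e, star (x : A) * x = star (y : A) * y →
      star (T x) * T x = star (T y) * T y)
    (c : Unitization ℂ A) (x y : principalLeftIdeal A e) :
    star (T (Unitization.lift (leftMul e) c x)) * T y =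
      star (T x) * T (Unitization.lift (leftMul e) (star c) y) := by
  have hspan : c ∈ Submodule.span ℂ (unitary (Unitization ℂ A) : Set (Unitization ℂ A)) := by
    rw [CStarAlgebra.span_unitary]
    trivial
  induction hspan using Submodule.span_induction with
  | mem c hc =>
    have hy : Unitization.lift (leftMul e) c (Unitization.lift (leftMul e) (star c) y) = y := by
      rw [← Module.End.mul_apply, ← map_mul, Unitary.mul_star_self_of_mem hc, map_one,
        Module.End.one_apply]
    have hpolar := star_map_mul_map_eq_of_star_mul_self_eq
      (S := T ∘ₗ Unitization.lift (leftMul e) c) (T := T)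
      (fun z => hT _ _ (star_mul_self_lift_leftMul hc z)) x
      (Unitization.lift (leftMul e) (star c) y)
    rwa [LinearMap.comp_apply, LinearMap.comp_apply, hy] at hpolar
  | zero => simp only [star_zero, map_zero, LinearMap.zero_apply, zero_mul, mul_zero]
  | add c d _ _ hc hd =>
    simp only [star_add, map_add, LinearMap.add_apply, add_mul, mul_add, hc, hd]
  | smul r c _ hc =>
    simp only [star_smul, map_smul, LinearMap.smul_apply, smul_mul_assoc, mul_smul_comm, hc]

theorem star_map_leftMul_mul_map {T : principalLeftIdeal A e →ₗ[ℂ] B}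
    (hT : ∀ x y : principalLeftIdeal A e, star (x : A) * x = star (y : A) * y →
      star (T x) * T x = star (T y) * T y)
    (a : A) (x y : principalLeftIdeal A e) :
    star (T (leftMul e a x)) * T y = star (T x) * T (leftMul e (star a) y) := by
  have hinr (b : A) : Unitization.lift (leftMul e) (b : Unitization ℂ A) = leftMul e b := by simp
  simpa only [← Unitization.inr_star, hinr] using
    star_map_lift_leftMul_mul_map hT (a : Unitization ℂ A) x y

end principalLeftIdeal

/-- `T` preserves the norms of columns with two entries in the subspace `V`. The square
`‖x* x + y* y‖` of the norm of the column with entries `x`, `y` replaces the norm itself. -/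
def IsColumnIsometric {A B : Type*} [NonUnitalCStarAlgebra A] [NonUnitalCStarAlgebra B]
    {V : Submodule ℂ A} (T : V → B) : Prop :=
  ∀ x y : V, ‖star (T x) * T x + star (T y) * T y‖ = ‖star (x : A) * x + star (y : A) * y‖

namespace IsColumnIsometric

variable {A B : Type*} [NonUnitalCStarAlgebra A] [NonUnitalCStarAlgebra B]

theorem symm {V : Submodule ℂ A} {W : Submodule ℂ B} {φ : V ≃ₗ[ℂ] W}
    (h : IsColumnIsometric fun x => (φ x : B)) : IsColumnIsometric fun y => (φ.symm y : A) := by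
  intro x y
  simpa using (h (φ.symm x) (φ.symm y)).symm

theorem norm_map {V : Submodule ℂ A} {T : V →ₗ[ℂ] B} (h : IsColumnIsometric T) (x : V) :
    ‖T x‖ = ‖(x : A)‖ := by
  have hsq := h x 0
  simp only [map_zero, ZeroMemClass.coe_zero, mul_zero, add_zero,
    CStarRing.norm_star_mul_self] at hsq
  exact (mul_self_inj (norm_nonneg _) (norm_nonneg _)).1 hsq

open principalLeftIdeal

variable {e : A} {f : B}

theorem star_map_mul_map_le [PartialOrder A] [StarOrderedRing A] [PartialOrder B]
    [StarOrderedRing B] (hf : IsStarProjection f) {V : Submodule ℂ A}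
    {T : V → principalLeftIdeal B f} (hsurj : Function.Surjective T)
    (h : IsColumnIsometric fun x => (T x : B)) {x y : V}
    (hxy : star (x : A) * x ≤ star (y : A) * y) :
    star (T x : B) * T x ≤ star (T y : B) * T y := by
  refine star_mul_self_le_of_forall_norm_add_le hf (coe_mul_eq hf.isIdempotentElem _)
    (coe_mul_eq hf.isIdempotentElem _) fun z hz => ?_
  obtain ⟨t, ht⟩ := hsurj ⟨z, (mem_iff_mul_eq hf.isIdempotentElem).2 hz⟩
  obtain rfl : (T t : B) = z := congr(($ht : B))
  rw [h x t, h y t]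
  exact CStarAlgebra.norm_le_norm_of_nonneg_of_le
    (add_nonneg (star_mul_self_nonneg _) (star_mul_self_nonneg _)) (add_le_add_left hxy _)

theorem star_map_mul_map_eq (hf : IsStarProjection f) {V : Submodule ℂ A}
    {T : V → principalLeftIdeal B f} (hsurj : Function.Surjective T)
    (h : IsColumnIsometric fun x => (T x : B)) {x y : V}
    (hxy : star (x : A) * x = star (y : A) * y) :
    star (T x : B) * T x = star (T y : B) * T y := by
  let _ := CStarAlgebra.spectralOrder A
  have := CStarAlgebra.spectralOrderedRing A
  let _ := CStarAlgebra.spectralOrder B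
  have := CStarAlgebra.spectralOrderedRing B
  exact le_antisymm (h.star_map_mul_map_le hf hsurj hxy.le) (h.star_map_mul_map_le hf hsurj hxy.ge)

theorem star_map_generator_mul_map_generator (he : IsStarProjection e) (hf : IsStarProjection f)
    {φ : principalLeftIdeal A e ≃ₗ[ℂ] principalLeftIdeal B f}
    (h : IsColumnIsometric fun x => (φ x : B)) :
    star (φ (generator he.isIdempotentElem) : B) * φ (generator he.isIdempotentElem) = f := by
  let _ := CStarAlgebra.spectralOrder A
  have := CStarAlgebra.spectralOrderedRing A
  let _ := CStarAlgebra.spectralOrder B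
  have := CStarAlgebra.spectralOrderedRing B
  set E := generator he.isIdempotentElem
  set F := generator hf.isIdempotentElem
  have norm_φ (x : principalLeftIdeal A e) : ‖(φ x : B)‖ = ‖(x : A)‖ :=
    norm_map (T := (principalLeftIdeal B f).subtype ∘ₗ φ.toLinearMap) h x
  have hle : star (φ E : B) * φ E ≤ f :=
    star_mul_self_le_of_isStarProjection hf (coe_mul_eq hf.isIdempotentElem _)
      ((norm_φ E).trans_le he.norm_le)
  have hwe : star (φ.symm F : A) * φ.symm F ≤ star (E : A) * E := by
    have hEE : star (E : A) * E = e := by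
      change star e * e = e
      rw [he.isSelfAdjoint.star_eq, he.isIdempotentElem.eq]
    rw [hEE]
    refine star_mul_self_le_of_isStarProjection he (coe_mul_eq he.isIdempotentElem _) ?_
    rw [← norm_φ, φ.apply_symm_apply]
    exact hf.norm_le
  have hge : f ≤ star (φ E : B) * φ E :=
    calc f = star f * f := by rw [hf.isSelfAdjoint.star_eq, hf.isIdempotentElem.eq]
      _ = star (φ (φ.symm F) : B) * φ (φ.symm F) := by rw [φ.apply_symm_apply]; rfl
      _ ≤ star (φ E : B) * φ E := h.star_map_mul_map_le hf φ.surjective hwe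
  exact le_antisymm hle hge

theorem star_map_leftMul_mul_map (hf : IsStarProjection f)
    {φ : principalLeftIdeal A e →ₗ[ℂ] principalLeftIdeal B f} (hsurj : Function.Surjective φ)
    (h : IsColumnIsometric fun x => (φ x : B)) (a : A) (x y : principalLeftIdeal A e) :
    star (φ (leftMul e a x) : B) * φ y = star (φ x : B) * φ (leftMul e (star a) y) :=
  principalLeftIdeal.star_map_leftMul_mul_map (T := (principalLeftIdeal B f).subtype ∘ₗ φ)
    (fun _ _ => h.star_map_mul_map_eq hf hsurj) a x y

theorem map_leftMul_eq_mul (hf : IsStarProjection f)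
    {φ : principalLeftIdeal A e →ₗ[ℂ] principalLeftIdeal B f} (hsurj : Function.Surjective φ)
    (h : IsColumnIsometric fun x => (φ x : B)) {c c' : principalLeftIdeal A e}
    {d : principalLeftIdeal B f} (hcd : (φ c' : B) = φ c * d) (a : A) :
    (φ (leftMul e a c') : B) = φ (leftMul e a c) * d := by
  refine eq_of_forall_star_mul_eq (V := (principalLeftIdeal B f).toAddSubgroup)
    (φ _).2 (mul_mem _ d.2) fun z hz => ?_
  obtain ⟨y, hy⟩ := hsurj ⟨z, hz⟩
  obtain rfl : (φ y : B) = z := congr(($hy : B))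
  have hadj (x : principalLeftIdeal A e) :
      star (φ y : B) * φ (leftMul e a x) = star (φ (leftMul e (star a) y) : B) * φ x := by
    rw [h.star_map_leftMul_mul_map hf hsurj, star_star]
  rw [hadj, hcd, ← mul_assoc, ← hadj, mul_assoc]

variable {φ : principalLeftIdeal A e ≃ₗ[ℂ] principalLeftIdeal B f}

theorem map_leftMul_eq_map_mul_map_leftMul_symm (he : IsStarProjection e) (hf : IsStarProjection f)
    (h : IsColumnIsometric fun x => (φ x : B)) (x y : principalLeftIdeal A e) :
    (φ (leftMul e x y) : B) =
      φ x * φ (leftMul e (φ.symm (generator hf.isIdempotentElem)) y) := by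
  set F := generator hf.isIdempotentElem
  have hFy : (φ.symm (φ (leftMul e (φ.symm F) y)) : A) = φ.symm F * y := by
    rw [φ.symm_apply_apply, coe_leftMul]
  have hsymm : φ.symm (leftMul f (φ x) (φ (leftMul e (φ.symm F) y))) = leftMul e x y := by
    apply Subtype.ext
    calc (φ.symm (leftMul f (φ x) (φ (leftMul e (φ.symm F) y))) : A)
        = φ.symm (leftMul f (φ x) F) * y :=
          h.symm.map_leftMul_eq_mul (φ := φ.symm.toLinearMap) he φ.symm.surjective hFy _
      _ = x * y := by rw [leftMul_generator, φ.symm_apply_apply]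
  rw [← hsymm, φ.apply_symm_apply, coe_leftMul]

theorem map_leftMul (he : IsStarProjection e) (hf : IsStarProjection f)
    (h : IsColumnIsometric fun x => (φ x : B)) (x y : principalLeftIdeal A e) :
    (φ (leftMul e x y) : B) = φ x * (star (φ (generator he.isIdempotentElem) : B) * φ y) := by
  set E := generator he.isIdempotentElem
  set w := φ.symm (generator hf.isIdempotentElem)
  have hEE : leftMul e (E : A) E = E := leftMul_generator he.isIdempotentElem E
  have hadj : star (φ E : B) * φ (leftMul e E y) = star (φ E : B) * φ y := by
    have hEstar : star (E : A) = E := he.isSelfAdjoint.star_eq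
    have hself := h.star_map_leftMul_mul_map (φ := φ.toLinearMap) hf φ.surjective E E y
    rw [hEstar, hEE] at hself
    exact hself.symm
  calc (φ (leftMul e x y) : B) = φ x * φ (leftMul e w y) :=
        h.map_leftMul_eq_map_mul_map_leftMul_symm he hf x y
    _ = φ x * (f * φ (leftMul e w y)) := by
      rw [← mul_assoc, coe_mul_eq hf.isIdempotentElem]
    _ = φ x * (star (φ E : B) * φ (leftMul e E y)) := by
      rw [h.map_leftMul_eq_map_mul_map_leftMul_symm he hf E y, ← mul_assoc (star _),
        h.star_map_generator_mul_map_generator he hf]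
    _ = φ x * (star (φ E : B) * φ y) := by rw [hadj]

end IsColumnIsometric

section MatrixNorm

variable {A : Type*} [NonUnitalCStarAlgebra A]

theorem norm_le_one_of_norm_sum_star_mul_self_le_one {ι : Type*} [Fintype ι] {v : ι → A}
    (hv : ‖∑ i, star (v i) * v i‖ ≤ 1) (j : ι) : ‖v j‖ ≤ 1 := by
  let _ := CStarAlgebra.spectralOrder A
  have := CStarAlgebra.spectralOrderedRing A
  have hj : ‖star (v j) * v j‖ ≤ 1 :=
    (CStarAlgebra.norm_le_norm_of_nonneg_of_le (star_mul_self_nonneg _)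
      (Finset.single_le_sum (f := fun i => star (v i) * v i)
        (fun i _ => star_mul_self_nonneg (v i)) (Finset.mem_univ j))).trans hv
  rw [CStarRing.norm_star_mul_self] at hj
  nlinarith [norm_nonneg (v j)]

theorem norm_sum_star_mul_mul_le {ι : Type*} [Fintype ι] {t : A} (ht : ‖t‖ ≤ 1) (v : ι → A) :
    ‖∑ i, star (t * v i) * (t * v i)‖ ≤ ‖∑ i, star (v i) * v i‖ := by
  let _ := CStarAlgebra.spectralOrder A
  have := CStarAlgebra.spectralOrderedRing A
  have htt : ‖star t * t‖ ≤ 1 := by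
    rw [CStarRing.norm_star_mul_self]
    exact mul_le_one₀ ht (norm_nonneg t) ht
  refine CStarAlgebra.norm_le_norm_of_nonneg_of_le
    (Finset.sum_nonneg fun i _ => star_mul_self_nonneg _) (Finset.sum_le_sum fun i _ => ?_)
  calc star (t * v i) * (t * v i) = star (v i) * (star t * t) * v i := by
        simp only [star_mul, mul_assoc]
    _ ≤ ‖star t * t‖ • (star (v i) * v i) := CStarAlgebra.star_left_conjugate_le_norm_smul
    _ ≤ star (v i) * v i := smul_le_of_le_one_left (star_mul_self_nonneg _) htt

variable {n : ℕ}

theorem cnorm_updateCol_zero {e : A} (he : IsStarProjection e) (j : Fin n) {x : Fin n → A}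
    (hx : ∀ i, x i * e = x i) :
    cnorm (Matrix.updateCol 0 j x) = √‖∑ i, star (x i) * x i‖ := by
  have hmulVec (v : Fin n → A) (i : Fin n) :
      (Matrix.updateCol 0 j x).mulVec v i = x i * v j := by
    simp [Matrix.mulVec, dotProduct, Matrix.updateCol_apply]
  simp only [cnorm, hmulVec]
  apply IsGreatest.csSup_eq
  constructor
  · refine ⟨Pi.single j e, ?_, by simp only [Pi.single_eq_same, hx]⟩
    rw [Finset.sum_eq_single j (by simp +contextual) (by simp), Pi.single_eq_same,
      he.isSelfAdjoint.star_eq, he.isIdempotentElem.eq]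
    exact he.norm_le
  · rintro _ ⟨v, hv, rfl⟩
    have hvj : ‖v j‖ ≤ 1 := norm_le_one_of_norm_sum_star_mul_self_le_one hv j
    apply Real.sqrt_le_sqrt
    calc ‖∑ i, star (x i * v j) * (x i * v j)‖
        = ‖star (v j) * (∑ i, star (x i) * x i) * v j‖ := by
          simp only [star_mul, Finset.mul_sum, Finset.sum_mul, mul_assoc]
      _ ≤ ‖star (v j)‖ * ‖∑ i, star (x i) * x i‖ * ‖v j‖ := norm_mul₃_le
      _ ≤ 1 * ‖∑ i, star (x i) * x i‖ * 1 := by rw [norm_star]; gcongr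
      _ = ‖∑ i, star (x i) * x i‖ := by ring

theorem cnorm_map_mul_star {u : A} (hu : ‖u‖ ≤ 1) {X : Matrix (Fin n) (Fin n) A}
    (hX : ∀ i j, X i j * (star u * u) = X i j) :
    cnorm (X.map fun a => a * star u) = cnorm X := by
  have mulVec_map (v : Fin n → A) :
      (X.map fun a => a * star u).mulVec v = X.mulVec fun i => star u * v i := by
    ext i
    simp only [Matrix.mulVec, dotProduct, Matrix.map_apply, mul_assoc]
  have mulVec_map_mul (v : Fin n → A) :
      (X.map fun a => a * star u).mulVec (fun i => u * v i) = X.mulVec v := by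
    ext i
    simp only [Matrix.mulVec, dotProduct, Matrix.map_apply]
    refine Finset.sum_congr rfl fun j _ => ?_
    rw [← mul_assoc, mul_assoc (X i j), hX]
  unfold cnorm
  congr 1
  ext r
  constructor
  · rintro ⟨v, hv, rfl⟩
    have hu' : ‖star u‖ ≤ 1 := (norm_star u).trans_le hu
    exact ⟨fun i => star u * v i, (norm_sum_star_mul_mul_le hu' v).trans hv, by rw [mulVec_map]⟩
  · rintro ⟨v, hv, rfl⟩
    exact ⟨fun i => u * v i, (norm_sum_star_mul_mul_le hu v).trans hv, by rw [mulVec_map_mul]⟩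

end MatrixNorm

namespace IsCompletelyIsometric

variable {A B : Type*} [NonUnitalCStarAlgebra A] [NonUnitalCStarAlgebra B]

open principalLeftIdeal in
theorem isColumnIsometric {e : A} {f : B} (he : IsStarProjection e) (hf : IsStarProjection f)
    {φ : principalLeftIdeal A e →ₗ[ℂ] principalLeftIdeal B f}
    (h : IsCompletelyIsometric fun x => (φ x : B)) : IsColumnIsometric fun x => (φ x : B) := by
  intro x y
  have hcol := h 2 (Matrix.updateCol 0 0 ![x, y])
  rw [Matrix.map_updateCol, Matrix.map_updateCol, Matrix.map_zero _ (by simp),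
    Matrix.map_zero _ (by simp),
    cnorm_updateCol_zero hf 0 (x := (fun z => (φ z : B)) ∘ ![x, y])
      fun _ => coe_mul_eq hf.isIdempotentElem _,
    cnorm_updateCol_zero he 0 (x := Subtype.val ∘ ![x, y])
      fun _ => coe_mul_eq he.isIdempotentElem _,
    Real.sqrt_inj (norm_nonneg _) (norm_nonneg _)] at hcol
  simpa [Fin.sum_univ_two] using hcol

theorem mul_star {V : Submodule ℂ A} {T : V → B} (h : IsCompletelyIsometric T) {u : B}
    (hu : ‖u‖ ≤ 1) (hT : ∀ x, T x * (star u * u) = T x) :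
    IsCompletelyIsometric fun x => T x * star u := by
  intro n X
  rw [← h n X]
  exact cnorm_map_mul_star hu (X := X.map T) fun i j => hT (X i j)

end IsCompletelyIsometric

theorem range_mul_star_eq_principalLeftIdeal {X B : Type*} [NonUnitalCStarAlgebra B] {u : B}
    (hu : u * star u * u = u) {T : X → principalLeftIdeal B (star u * u)}
    (hsurj : Function.Surjective T) :
    Set.range (fun x => (T x : B) * star u) = principalLeftIdeal B (star u) := by
  apply Set.Subset.antisymm
  · rintro _ ⟨x, rfl⟩
    exact ⟨T x, rfl⟩
  · rintro _ ⟨b, rfl⟩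
    obtain ⟨x, hx⟩ := hsurj ⟨b * (star u * u), b, rfl⟩
    have hstar : star u * u * star u = star u := by simpa [mul_assoc] using congr(star $hu)
    exact ⟨x, by simp only [hx, mul_assoc b, hstar]⟩

theorem banach_stone_principal_ideals
    {A B : Type*} [NonUnitalCStarAlgebra A] [NonUnitalCStarAlgebra B]
    (e : A) (f : B) (he₁ : star e = e) (he₂ : e * e = e)
    (hf₁ : star f = f) (hf₂ : f * f = f)
    (φ : principalLeftIdeal A e →ₗ[ℂ] principalLeftIdeal B f)
    (hbij : Function.Bijective φ)
    (hci : IsCompletelyIsometric (fun x => (φ x : B)))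
    (u : B) (hu : u = (φ ⟨e, e, he₂.symm⟩ : B)) :
    -- (1) `u` is a partial isometry with initial projection `f`
    star u * u = f ∧
    star (u * star u) = u * star u ∧ (u * star u) * (u * star u) = u * star u ∧
    -- (2) `π := φ(·) * u*` is multiplicative ...
    (∀ x y z : principalLeftIdeal A e, (z : A) = (x : A) * (y : A) →
      (φ z : B) * star u = ((φ x : B) * star u) * ((φ y : B) * star u)) ∧
    -- ... completely isometric ...
    IsCompletelyIsometric (fun x : principalLeftIdeal A e => (φ x : B) * star u) ∧
    -- ... with range `{b * u* : b ∈ B} = {b * (u * u*) : b ∈ B}` ...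
    Set.range (fun x : principalLeftIdeal A e => (φ x : B) * star u)
      = {y : B | ∃ b : B, y = b * star u} ∧
    {y : B | ∃ b : B, y = b * star u} = {y : B | ∃ b : B, y = b * (u * star u)} ∧
    -- ... a norm-closed left ideal of `B` with right identity `u * u*`
    IsClosed {y : B | ∃ b : B, y = b * star u} ∧
    (∀ b : B, ∀ y ∈ {y : B | ∃ b : B, y = b * star u},
      b * y ∈ {y : B | ∃ b : B, y = b * star u}) ∧
    (∀ y ∈ {y : B | ∃ b : B, y = b * star u}, y * (u * star u) = y) ∧
    -- (3) `φ = π(·) * u`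
    (∀ x : principalLeftIdeal A e, (φ x : B) = ((φ x : B) * star u) * u) := by
  have he : IsStarProjection e := ⟨he₂, he₁⟩
  have hf : IsStarProjection f := ⟨hf₂, hf₁⟩
  have hcol : IsColumnIsometric fun x => (LinearEquiv.ofBijective φ hbij x : B) :=
    hci.isColumnIsometric he hf
  have hmul : ∀ x y : principalLeftIdeal A e,
      (φ (principalLeftIdeal.leftMul e x y) : B) = φ x * (star u * φ y) :=
    hu ▸ hcol.map_leftMul he hf
  obtain rfl : star u * u = f := hu ▸ hcol.star_map_generator_mul_map_generator he hf
  have hφ := fun x => principalLeftIdeal.coe_mul_eq hf₂ (φ x)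
  have hpi := mul_star_mul_self_of_isStarProjection_star_mul_self hf
  have hproj : IsStarProjection (u * star u) := isStarProjection_mul_star hpi
  have hideal : {y : B | ∃ b : B, y = b * star u} = principalLeftIdeal B (u * star u) :=
    congrArg SetLike.coe (principalLeftIdeal.star_eq_mul_star hpi)
  refine ⟨rfl, hproj.isSelfAdjoint, hproj.isIdempotentElem, fun x y z hz => ?_,
    hci.mul_star (norm_le_one_of_isStarProjection_star_mul_self hf) hφ,
    range_mul_star_eq_principalLeftIdeal hpi hbij.surjective, hideal, ?_,
    fun b _ => principalLeftIdeal.mul_mem b, fun y hy => ?_, fun x => by rw [mul_assoc, hφ]⟩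
  · obtain rfl : z = principalLeftIdeal.leftMul e x y := Subtype.ext hz
    simp only [hmul, mul_assoc]
  · exact hideal ▸ principalLeftIdeal.isClosed hproj.isIdempotentElem
  · exact (principalLeftIdeal.mem_iff_mul_eq hproj.isIdempotentElem).1 (hideal.subset hy)
end

section
/- Let J be a closed left ideal of a C*-algebra A, let E be the closed linear span in A of {x * y* : x, y ∈ J} (a C*-subalgebra of A which contains J), let H be a complex Hilbert space, and let π : J → B(H) be a linear map. Then the following are equivalent: (a) there exists a *-homomorphism θ : E → B(H) (a non-unital star algebra homomorphism) with θ(x) = π(x) for all x ∈ J; (b) π is multiplicative (π(x * y) = π(x) ∘ π(y) for all x, y ∈ J) and a triple morphism (π(x * y* * z) = π(x) ∘ (π(y))* ∘ π(z) for all x, y, z ∈ J; note x * y* * z ∈ J). Moreover, when these hold, π is injective if and only if θ is injective, and if π is injective then π is isometric. -/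
open Filter Topology
open scoped InnerProductSpace TensorProduct

/-!
Given `π`, the algebra `A` acts on `J ⊗ H` by left multiplication of the first factor, and the
triple identity makes this a `*`-representation for the semi-inner product pulled back along
`w ⊗ η ↦ π w η`. Such a representation is automatically contractive: `‖a‖² - a* a = c* c` in the
unitization gives `‖a v‖² + ‖c v‖² = ‖a‖² ‖v‖²`. It therefore descends to a `*`-homomorphism `θ` of
`A` on the closure of `π(J) H`, which we extend by zero. Multiplicativity of `π` gives
`θ x = π x` also off this closure: for `β = π x - θ x` both `β` and `β*` vanish on `π(J) H`, and
hence `β* β = 0`.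

Conversely, the closed span `E` of `J J*` is a closed two-sided ideal of `A`, so `x x* ∈ E` forces
`x ∈ E` by an approximate unit of `E`. If `θ z = 0` and `π` is injective, then `z J = 0`, so
`z E = 0` and `z z* = 0`.
-/

lemma norm_sub_mul_sq_le {A : Type*} [NonUnitalNormedRing A] [StarRing A] [CStarRing A]
    (e x : A) :
    ‖x - e * x‖ ^ 2 ≤ ‖x * star x - e * (x * star x)‖ * (1 + ‖e‖) := by
  have factor : (x - e * x) * star (x - e * x) =
      (x * star x - e * (x * star x)) - (x * star x - e * (x * star x)) * star e := by
    simp only [star_sub, star_mul, mul_sub, sub_mul, mul_assoc]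
  calc ‖x - e * x‖ ^ 2 = ‖(x - e * x) * star (x - e * x)‖ := by
        rw [CStarRing.norm_self_mul_star, sq]
    _ ≤ ‖x * star x - e * (x * star x)‖ + ‖x * star x - e * (x * star x)‖ * ‖star e‖ := by
        rw [factor]
        exact (norm_sub_le _ _).trans (by gcongr; exact norm_mul_le _ _)
    _ = ‖x * star x - e * (x * star x)‖ * (1 + ‖e‖) := by rw [norm_star]; ring

lemma mem_of_mul_star_self_mem {A : Type*} [NonUnitalCStarAlgebra A]
    (S : NonUnitalStarSubalgebra ℂ A) [hS : IsClosed (S : Set A)]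
    (mul_mem_right : ∀ s ∈ S, ∀ a : A, s * a ∈ S) {x : A} (hx : x * star x ∈ S) : x ∈ S := by
  let _ := CStarAlgebra.spectralOrder S
  have _ := CStarAlgebra.spectralOrderedRing S
  have unit := CStarAlgebra.increasingApproximateUnit S
  have tendsto_zero : Tendsto (fun e : S => ‖x * star x - e * (x * star x)‖ * (1 + 1))
      (CStarAlgebra.approximateUnit S) (𝓝 0) := by
    have h : Tendsto (fun e : S => (e : A) * (x * star x)) (CStarAlgebra.approximateUnit S)
        (𝓝 (x * star x)) :=
      (continuous_subtype_val.tendsto _).comp (unit.tendsto_mul_right ⟨x * star x, hx⟩)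
    simpa using ((h.const_sub (x * star x)).norm.mul_const (1 + 1 : ℝ))
  have sq_tendsto_zero : Tendsto (fun e : S => ‖x - e * x‖ ^ 2)
      (CStarAlgebra.approximateUnit S) (𝓝 0) := by
    refine squeeze_zero' (.of_forall fun _ => by positivity) ?_ tendsto_zero
    filter_upwards [unit.eventually_norm] with e he
    exact (norm_sub_mul_sq_le (e : A) x).trans (by gcongr; exact he)
  have mul_tendsto : Tendsto (fun e : S => (e : A) * x) (CStarAlgebra.approximateUnit S) (𝓝 x) := by
    rw [tendsto_iff_norm_sub_tendsto_zero]
    simpa [norm_sub_rev] using sq_tendsto_zero.sqrt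
  exact hS.mem_of_tendsto mul_tendsto (.of_forall fun e => mul_mem_right e e.2 x)

section MulStar

variable {A : Type*} [NonUnitalCStarAlgebra A] (J : Submodule ℂ A)

/-- The closed linear span of `J J*`, called `E` in the theorem. -/
def closedSpanMulStar : Submodule ℂ A :=
  (Submodule.span ℂ {z : A | ∃ x ∈ J, ∃ y ∈ J, z = x * star y}).topologicalClosure

variable {J}

lemma isClosed_closedSpanMulStar : IsClosed (closedSpanMulStar J : Set A) :=
  Submodule.isClosed_topologicalClosure _

lemma mul_star_mem_closedSpanMulStar {x y : A} (hx : x ∈ J) (hy : y ∈ J) :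
    x * star y ∈ closedSpanMulStar J :=
  Submodule.le_topologicalClosure _ (Submodule.subset_span ⟨x, hx, y, hy, rfl⟩)

lemma closedSpanMulStar_le {S : Submodule ℂ A} (hS : IsClosed (S : Set A))
    (h : ∀ x ∈ J, ∀ y ∈ J, x * star y ∈ S) : closedSpanMulStar J ≤ S := by
  refine Submodule.topologicalClosure_minimal _ (Submodule.span_le.2 ?_) hS
  rintro _ ⟨x, hx, y, hy, rfl⟩
  exact h x hx y hy

lemma star_mem_closedSpanMulStar {z : A} (hz : z ∈ closedSpanMulStar J) :
    star z ∈ closedSpanMulStar J := by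
  suffices closedSpanMulStar J ≤
      (closedSpanMulStar J).comap (starLinearEquiv ℂ : A ≃ₗ⋆[ℂ] A).toLinearMap from this hz
  refine closedSpanMulStar_le (isClosed_closedSpanMulStar.preimage continuous_star) ?_
  intro x hx y hy
  simpa using mul_star_mem_closedSpanMulStar hy hx

lemma mul_mem_closedSpanMulStar (hJ : ∀ a : A, ∀ x ∈ J, a * x ∈ J) (a : A) {z : A}
    (hz : z ∈ closedSpanMulStar J) : a * z ∈ closedSpanMulStar J := by
  suffices closedSpanMulStar J ≤ (closedSpanMulStar J).comap (LinearMap.mulLeft ℂ a) from this hz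
  refine closedSpanMulStar_le (isClosed_closedSpanMulStar.preimage (continuous_const_mul a)) ?_
  intro x hx y hy
  simpa [mul_assoc] using mul_star_mem_closedSpanMulStar (hJ a x hx) hy

variable (J) in
/-- For a left ideal `J`, the closed span of `J J*` as a C*-subalgebra of `A`. -/
def mulStarSubalgebra (hJ : ∀ a : A, ∀ x ∈ J, a * x ∈ J) : NonUnitalStarSubalgebra ℂ A where
  __ := closedSpanMulStar J
  mul_mem' {a _} _ hb := mul_mem_closedSpanMulStar hJ a hb
  star_mem' := star_mem_closedSpanMulStar

instance isClosed_mulStarSubalgebra (hJ : ∀ a : A, ∀ x ∈ J, a * x ∈ J) :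
    IsClosed (mulStarSubalgebra J hJ : Set A) :=
  isClosed_closedSpanMulStar

lemma le_closedSpanMulStar (hJ : ∀ a : A, ∀ x ∈ J, a * x ∈ J) : J ≤ closedSpanMulStar J := by
  intro x hx
  refine mem_of_mul_star_self_mem (mulStarSubalgebra J hJ) (fun s hs a => ?_)
    (mul_star_mem_closedSpanMulStar hx hx)
  change s * a ∈ closedSpanMulStar J
  simpa using star_mem_closedSpanMulStar
    (mul_mem_closedSpanMulStar hJ (star a) (star_mem_closedSpanMulStar hs))

lemma eq_zero_of_mem_closedSpanMulStar_of_mul_eq_zero {z : A} (hz : z ∈ closedSpanMulStar J)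
    (h : ∀ w ∈ J, z * w = 0) : z = 0 := by
  have le_ker : closedSpanMulStar J ≤ LinearMap.ker (LinearMap.mulLeft ℂ z) :=
    closedSpanMulStar_le (isClosed_eq (continuous_const_mul z) continuous_const)
      fun x hx y _ => by simp [← mul_assoc, h x hx]
  exact (CStarRing.mul_star_self_eq_zero_iff z).1 (le_ker (star_mem_closedSpanMulStar hz))

end MulStar

section StarRep

variable {V H : Type*} [AddCommGroup V] [Module ℂ V]
  [NormedAddCommGroup H] [InnerProductSpace ℂ H]

/-- `ρ` respects adjoints for the semi-inner product that `Φ` pulls back to `V`: the notion of a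
`*`-representation on a pre-Hilbert space, where passing to the quotient by the null vectors is
replaced by working with their images under `Φ`. -/
def IsStarRepAlong {A : Type*} [Star A] (Φ : V →ₗ[ℂ] H) (ρ : A → Module.End ℂ V) : Prop :=
  ∀ a v w, ⟪Φ (ρ a v), Φ w⟫_ℂ = ⟪Φ v, Φ (ρ (star a) w)⟫_ℂ

lemma IsStarRepAlong.norm_map_le_of_unital {A : Type*} [CStarAlgebra A] {Φ : V →ₗ[ℂ] H}
    {ρ : A →ₐ[ℂ] Module.End ℂ V} (hρ : IsStarRepAlong Φ ρ) (a : A) (v : V) :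
    ‖Φ (ρ a v)‖ ≤ ‖a‖ * ‖Φ v‖ := by
  let _ := CStarAlgebra.spectralOrder A
  have _ := CStarAlgebra.spectralOrderedRing A
  have norm_sq (b : A) : (‖Φ (ρ b v)‖ : ℂ) ^ 2 = ⟪Φ v, Φ (ρ (star b * b) v)⟫_ℂ := by
    rw [map_mul, Module.End.mul_apply, ← hρ, inner_self_eq_norm_sq_to_K]
    rfl
  obtain ⟨c, hc⟩ := CStarAlgebra.nonneg_iff_eq_star_mul_self.1
    (sub_nonneg.2 (CStarAlgebra.star_mul_le_algebraMap_norm_sq (a := a)))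
  have pythagoras : ‖Φ (ρ a v)‖ ^ 2 + ‖Φ (ρ c v)‖ ^ 2 = ‖a‖ ^ 2 * ‖Φ v‖ ^ 2 := by
    apply Complex.ofReal_injective
    push_cast
    rw [norm_sq, norm_sq, ← inner_add_right, ← map_add, ← LinearMap.add_apply, ← map_add, ← hc,
      add_sub_cancel, IsScalarTower.algebraMap_apply ℝ ℂ A, AlgHom.commutes,
      Module.algebraMap_end_apply, map_smul, inner_smul_right, inner_self_eq_norm_sq_to_K]
    simp
  refine le_of_sq_le_sq ?_ (by positivity)
  rw [mul_pow, ← pythagoras]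
  exact le_add_of_nonneg_right (sq_nonneg _)

variable {A : Type*} [NonUnitalCStarAlgebra A] {Φ : V →ₗ[ℂ] H} {ρ : A →ₙₐ[ℂ] Module.End ℂ V}

lemma IsStarRepAlong.unitization (hρ : IsStarRepAlong Φ ρ) :
    IsStarRepAlong Φ (Unitization.lift ρ) := by
  intro a v w
  induction a with
  | inl_add_inr r a => simp [hρ a v w, mul_comm]

lemma IsStarRepAlong.norm_map_le (hρ : IsStarRepAlong Φ ρ) (a : A) (v : V) :
    ‖Φ (ρ a v)‖ ≤ ‖a‖ * ‖Φ v‖ := by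
  simpa [Unitization.norm_inr] using hρ.unitization.norm_map_le_of_unital (a : Unitization ℂ A) v

theorem IsStarRepAlong.exists_starAlgHom_of_denseRange [CompleteSpace H]
    (hρ : IsStarRepAlong Φ ρ) (hΦ : DenseRange Φ) :
    ∃ θ : A →⋆ₙₐ[ℂ] (H →L[ℂ] H), ∀ a v, θ a (Φ v) = Φ (ρ a v) := by
  have ext_range {S T : H →L[ℂ] H} (h : ∀ v, S (Φ v) = T (Φ v)) : S = T :=
    DFunLike.coe_injective (hΦ.equalizer S.continuous T.continuous (funext h))
  let T (a : A) : H →L[ℂ] H := (Φ ∘ₗ ρ a).extendOfNorm Φ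
  have T_apply (a : A) (v : V) : T a (Φ v) = Φ (ρ a v) :=
    LinearMap.extendOfNorm_eq hΦ ⟨‖a‖, hρ.norm_map_le a⟩ v
  have T_star (a : A) : T (star a) = star (T a) := by
    rw [ContinuousLinearMap.star_eq_adjoint, ContinuousLinearMap.eq_adjoint_iff]
    intro x y
    induction x, y using hΦ.induction_on₂ with
    | hp => exact isClosed_eq (by fun_prop) (by fun_prop)
    | h v w => rw [T_apply, T_apply, hρ, star_star]
  exact ⟨{
    toFun := T
    map_smul' c a := ext_range fun v => by simp [T_apply]
    map_zero' := ext_range fun v => by simp [T_apply]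
    map_add' a b := ext_range fun v => by simp [T_apply]
    map_mul' a b := ext_range fun v => by simp [T_apply]
    map_star' := T_star }, T_apply⟩

/-- The embedding of `B(K)` into `B(H)` as the operators that map into `K` and vanish on `Kᗮ`. -/
noncomputable def extendByZero [CompleteSpace H] (K : Submodule ℂ H) [CompleteSpace K] :
    (K →L[ℂ] K) →⋆ₙₐ[ℂ] (H →L[ℂ] H) where
  toFun T := K.subtypeL ∘L T ∘L K.orthogonalProjectionOnto
  map_smul' c T := by ext; simp
  map_zero' := by ext; simp
  map_add' S T := by ext; simp
  map_mul' S T := by ext; simp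
  map_star' T := by
    simp [ContinuousLinearMap.star_eq_adjoint, ContinuousLinearMap.adjoint_comp,
      Submodule.adjoint_subtypeL, Submodule.adjoint_orthogonalProjectionOnto,
      ContinuousLinearMap.comp_assoc]

theorem IsStarRepAlong.exists_starAlgHom [CompleteSpace H] (hρ : IsStarRepAlong Φ ρ) :
    ∃ θ : A →⋆ₙₐ[ℂ] (H →L[ℂ] H), (∀ a v, θ a (Φ v) = Φ (ρ a v)) ∧
      ∀ a x, θ a x ∈ (LinearMap.range Φ).topologicalClosure := by
  let K := (LinearMap.range Φ).topologicalClosure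
  have : CompleteSpace K := (Submodule.isClosed_topologicalClosure _).completeSpace_coe
  let Ψ : V →ₗ[ℂ] K :=
    Φ.codRestrict K fun v => Submodule.le_topologicalClosure _ (LinearMap.mem_range_self Φ v)
  have denseRange_Ψ : DenseRange Ψ :=
    ((denseRange_inclusion_iff subset_closure).2 subset_rfl).comp
      Φ.surjective_rangeRestrict.denseRange (continuous_inclusion _)
  have hρΨ : IsStarRepAlong Ψ ρ := hρ
  obtain ⟨θ, hθ⟩ := hρΨ.exists_starAlgHom_of_denseRange denseRange_Ψ
  refine ⟨(extendByZero K).comp θ, fun a v => ?_, fun a x => Subtype.prop _⟩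
  calc extendByZero K (θ a) (Φ v) = θ a (K.orthogonalProjectionOnto (Ψ v)) := rfl
    _ = Φ (ρ a v) := by
      rw [Submodule.orthogonalProjectionOnto_mem_subspace_eq_self, hθ]; rfl

end StarRep

section Extension

/-- Multiplicativity of a linear map on a subspace `J`. The product is passed as an element of `J`
together with an equation, so that `J` need not be closed under multiplication. -/
def IsMultiplicativeOn {A B : Type*} [NonUnitalNonAssocSemiring A] [Module ℂ A]
    [NonUnitalNonAssocSemiring B] [Module ℂ B] {J : Submodule ℂ A} (π : J →ₗ[ℂ] B) : Prop :=
  ∀ x y z : J, (z : A) = (x : A) * (y : A) → π z = π x * π y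

/-- Compatibility with the triple product `x y* z`, in the same encoding as
`IsMultiplicativeOn`. -/
def IsTripleMorphism {A B : Type*} [NonUnitalNonAssocSemiring A] [Star A] [Module ℂ A]
    [NonUnitalNonAssocSemiring B] [Star B] [Module ℂ B] {J : Submodule ℂ A}
    (π : J →ₗ[ℂ] B) : Prop :=
  ∀ x y z w : J, (w : A) = (x : A) * star (y : A) * (z : A) → π w = π x * star (π y) * π z

variable {A B : Type*} [NonUnitalCStarAlgebra A] [NonUnitalCStarAlgebra B]
  {J : Submodule ℂ A} (hJ : ∀ a : A, ∀ x ∈ J, a * x ∈ J)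

/-- The left regular representation of an algebra on a left ideal. -/
def leftMulEnd : A →ₙₐ[ℂ] Module.End ℂ J where
  toFun a := (LinearMap.mulLeft ℂ a).restrict (hJ a)
  map_smul' c a := LinearMap.ext fun w => Subtype.ext (smul_mul_assoc c a (w : A))
  map_zero' := LinearMap.ext fun w => Subtype.ext (zero_mul (w : A))
  map_add' a b := LinearMap.ext fun w => Subtype.ext (add_mul a b (w : A))
  map_mul' a b := LinearMap.ext fun w => Subtype.ext (mul_assoc a b (w : A))

@[simp]
lemma coe_leftMulEnd_apply (a : A) (w : J) : (leftMulEnd hJ a w : A) = a * w := rfl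

lemma IsTripleMorphism.star_map_leftMulEnd_mul {π : J →ₗ[ℂ] B} (hπ : IsTripleMorphism π) (a : A)
    (w v : J) :
    star (π (leftMulEnd hJ a w)) * π v = star (π w) * π (leftMulEnd hJ (star a) v) := by
  set d := star (π (leftMulEnd hJ a w)) * π v - star (π w) * π (leftMulEnd hJ (star a) v) with hd
  have map_mul_d (x : J) : π x * d = 0 := by
    rw [hd, mul_sub, ← mul_assoc, ← mul_assoc, sub_eq_zero,
      ← hπ x (leftMulEnd hJ a w) v (leftMulEnd hJ (x * star (w : A) * star a) v)
        (by simp [mul_assoc]),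
      ← hπ x w (leftMulEnd hJ (star a) v) (leftMulEnd hJ (x * star (w : A) * star a) v)
        (by simp [mul_assoc])]
  have star_d_mul_d : star d * d = 0 := by
    nth_rw 1 [hd]
    simp [sub_mul, mul_assoc, map_mul_d]
  exact sub_eq_zero.1 ((CStarRing.star_mul_self_eq_zero_iff d).1 star_d_mul_d)

theorem starAlgHom_apply_eq_of_nondegenerate {π : J →ₗ[ℂ] B} (hmul : IsMultiplicativeOn π)
    (htriple : IsTripleMorphism π) {θ : A →⋆ₙₐ[ℂ] B}
    (hθ : ∀ a w, θ a * π w = π (leftMulEnd hJ a w))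
    (hnd : ∀ b : B, (∀ w, b * π w = 0) → ∀ a, b * θ a = 0) (x : J) : θ x = π x := by
  set β := π x - θ x with hβ
  have β_mul_θ : ∀ a, β * θ a = 0 := hnd β fun w => by
    rw [hβ, sub_mul, hθ, hmul x w (leftMulEnd hJ x w) rfl, sub_self]
  have β_mul_star : β * star β = π x * (star (π x) - θ (star (x : A))) := by
    have h : β * star β = β * star (π x) := by
      nth_rw 2 [hβ]
      rw [star_sub, ← map_star θ, mul_sub, β_mul_θ, sub_zero]
    rw [← (IsSelfAdjoint.mul_star_self β).star_eq, h, star_mul, star_star, hβ, star_sub, map_star θ]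
  have β_mul_star_mul (w : J) : β * star β * π w = 0 := by
    rw [β_mul_star, mul_assoc, sub_mul, mul_sub, hθ, ← mul_assoc, ← htriple x x w
      (leftMulEnd hJ (x * star (x : A)) w) rfl, ← hmul x _ (leftMulEnd hJ (x * star (x : A)) w)
      (mul_assoc (x : A) _ _), sub_self]
  have star_β_mul (w : J) : star β * π w = 0 := by
    rw [← CStarRing.star_mul_self_eq_zero_iff, star_mul, star_star, mul_assoc, ← mul_assoc β,
      β_mul_star_mul, mul_zero]
  have star_β_mul_β : star β * β = 0 := by
    nth_rw 2 [hβ]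
    rw [mul_sub, star_β_mul, hnd _ star_β_mul, sub_self]
  exact (sub_eq_zero.1 ((CStarRing.star_mul_self_eq_zero_iff β).1 star_β_mul_β)).symm

variable {H : Type*} [NormedAddCommGroup H] [InnerProductSpace ℂ H]

/-- The map `w ⊗ η ↦ π w η`, whose range is dense in the essential subspace of `π`. -/
noncomputable def orbitMap (π : J →ₗ[ℂ] (H →L[ℂ] H)) : J ⊗[ℂ] H →ₗ[ℂ] H :=
  TensorProduct.lift (ContinuousLinearMap.coeLM ℂ ∘ₗ π)

@[simp]
lemma orbitMap_tmul (π : J →ₗ[ℂ] (H →L[ℂ] H)) (w : J) (η : H) :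
    orbitMap π (w ⊗ₜ η) = π w η := by
  simp [orbitMap]

/-- The action `a (w ⊗ η) = a w ⊗ η` on `J ⊗ H`, through which `θ a (π w η) = π (a w) η` will be
defined. -/
noncomputable def leftMulTensor : A →ₙₐ[ℂ] Module.End ℂ (J ⊗[ℂ] H) :=
  (Module.End.rTensorAlgHom ℂ J H : Module.End ℂ J →ₙₐ[ℂ] Module.End ℂ (J ⊗[ℂ] H)).comp
    (leftMulEnd hJ)

@[simp]
lemma leftMulTensor_tmul (a : A) (w : J) (η : H) :
    leftMulTensor hJ a (w ⊗ₜ[ℂ] η) = leftMulEnd hJ a w ⊗ₜ η := rfl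

variable [CompleteSpace H] {π : J →ₗ[ℂ] (H →L[ℂ] H)}

lemma IsTripleMorphism.isStarRepAlong_orbitMap (hπ : IsTripleMorphism π) :
    IsStarRepAlong (orbitMap π) (leftMulTensor (H := H) hJ) := by
  intro a m n
  induction m with
  | zero => simp
  | add m₁ m₂ h₁ h₂ => simp only [map_add, inner_add_left, h₁, h₂]
  | tmul w η =>
    induction n with
    | zero => simp
    | add n₁ n₂ h₁ h₂ => simp only [map_add, inner_add_right, h₁, h₂]
    | tmul v ξ =>
      simp only [leftMulTensor_tmul, orbitMap_tmul]
      rw [← ContinuousLinearMap.adjoint_inner_right, ← ContinuousLinearMap.adjoint_inner_right]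
      exact congrArg (fun T : H →L[ℂ] H => ⟪η, T ξ⟫_ℂ) (hπ.star_map_leftMulEnd_mul hJ a w v)

theorem exists_starAlgHom_extending (hJ : ∀ a : A, ∀ x ∈ J, a * x ∈ J)
    (hmul : IsMultiplicativeOn π) (htriple : IsTripleMorphism π) :
    ∃ θ : A →⋆ₙₐ[ℂ] (H →L[ℂ] H), ∀ x : J, θ x = π x := by
  obtain ⟨θ, hθ, range_le⟩ := (htriple.isStarRepAlong_orbitMap hJ).exists_starAlgHom
  refine ⟨θ, starAlgHom_apply_eq_of_nondegenerate hJ hmul htriple (fun a w => ?_) fun T hT a => ?_⟩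
  · ext η
    simpa using hθ a (w ⊗ₜ η)
  · have range_le_ker : LinearMap.range (orbitMap π) ≤ T.ker := by
      rw [LinearMap.range_le_ker_iff]
      ext w η
      simpa using DFunLike.congr_fun (hT w) η
    ext ξ
    exact Submodule.topologicalClosure_minimal _ range_le_ker T.isClosed_ker (range_le a ξ)

end Extension

section Restriction

variable {A B : Type*} [NonUnitalCStarAlgebra A] [NonUnitalCStarAlgebra B]

/-- The bundled `*`-homomorphism given by a linear map on the underlying subspace of a
`*`-subalgebra, with the hypotheses encoded as in `IsMultiplicativeOn`. -/
def starAlgHomOfLinearMap (S : NonUnitalStarSubalgebra ℂ A) (θ : S.toSubmodule →ₗ[ℂ] B)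
    (hmul : ∀ z w zw : S.toSubmodule, (zw : A) = (z : A) * (w : A) → θ zw = θ z * θ w)
    (hstar : ∀ z w : S.toSubmodule, (w : A) = star (z : A) → θ w = star (θ z)) :
    S →⋆ₙₐ[ℂ] B where
  toFun z := θ ⟨z, z.2⟩
  map_smul' c z := θ.map_smul c ⟨z, z.2⟩
  map_zero' := θ.map_zero
  map_add' z w := θ.map_add ⟨z, z.2⟩ ⟨w, w.2⟩
  map_mul' z w := hmul ⟨z, z.2⟩ ⟨w, w.2⟩ _ rfl
  map_star' z := hstar ⟨z, z.2⟩ _ rfl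

variable {J : Submodule ℂ A} {hJ : ∀ a : A, ∀ x ∈ J, a * x ∈ J} {π : J →ₗ[ℂ] B}

/-- `θ` restricts to `π` on the left ideal `J`, which lies in the closed span of `J J*`. -/
def IsExtension (θ : mulStarSubalgebra J hJ →⋆ₙₐ[ℂ] B) (π : J →ₗ[ℂ] B) : Prop :=
  ∀ x : J, θ ⟨x, le_closedSpanMulStar hJ x.2⟩ = π x

lemma isExtension_starAlgHomOfLinearMap {θ : closedSpanMulStar J →ₗ[ℂ] B}
    (hmul : ∀ z w zw : closedSpanMulStar J, (zw : A) = (z : A) * (w : A) → θ zw = θ z * θ w)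
    (hstar : ∀ z w : closedSpanMulStar J, (w : A) = star (z : A) → θ w = star (θ z))
    (hθ : ∀ (x : J) (hx : (x : A) ∈ closedSpanMulStar J), θ ⟨(x : A), hx⟩ = π x) :
    IsExtension (starAlgHomOfLinearMap (mulStarSubalgebra J hJ) θ hmul hstar) π :=
  fun x => hθ x _

namespace IsExtension

variable {θ : mulStarSubalgebra J hJ →⋆ₙₐ[ℂ] B}

lemma isMultiplicativeOn (hθ : IsExtension θ π) : IsMultiplicativeOn π := by
  intro x y z hz
  rw [← hθ, ← hθ, ← hθ, ← map_mul]
  exact congrArg θ (Subtype.ext hz)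

lemma isTripleMorphism (hθ : IsExtension θ π) : IsTripleMorphism π := by
  intro x y z w hw
  rw [← hθ, ← hθ, ← hθ, ← hθ, ← map_star, ← map_mul, ← map_mul]
  exact congrArg θ (Subtype.ext hw)

lemma injective_iff (hθ : IsExtension θ π) : Function.Injective π ↔ Function.Injective θ := by
  refine ⟨fun hπ => (injective_iff_map_eq_zero θ).2 fun z hz => ?_, fun hinj x y hxy => ?_⟩
  · refine Subtype.ext (eq_zero_of_mem_closedSpanMulStar_of_mul_eq_zero z.2 fun w hw => ?_)
    have map_zero_mul : π ⟨z * w, hJ z w hw⟩ = 0 := by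
      rw [← hθ]
      exact (map_mul θ z ⟨w, le_closedSpanMulStar hJ hw⟩).trans (by rw [hz, zero_mul])
    exact congrArg Subtype.val ((map_eq_zero_iff π hπ).1 map_zero_mul)
  · rw [← hθ, ← hθ] at hxy
    exact Subtype.ext (Subtype.mk.inj (hinj hxy))

lemma norm_map (hθ : IsExtension θ π) (hπ : Function.Injective π) (x : J) : ‖π x‖ = ‖(x : A)‖ := by
  rw [← hθ]
  exact NonUnitalStarAlgHom.norm_map θ (hθ.injective_iff.1 hπ) _

end IsExtension

end Restriction

theorem ideal_homomorphism_characterization_general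
    {A : Type*} [NonUnitalCStarAlgebra A]
    {H : Type*} [NormedAddCommGroup H] [InnerProductSpace ℂ H] [CompleteSpace H]
    (J : Submodule ℂ A) (hJ : ∀ a : A, ∀ x ∈ J, a * x ∈ J)
    (E : Submodule ℂ A)
    (hE : E = (Submodule.span ℂ {z : A | ∃ x ∈ J, ∃ y ∈ J, z = x * star y}).topologicalClosure)
    (π : J →ₗ[ℂ] (H →L[ℂ] H)) :
    ((∃ θ : E →ₗ[ℂ] (H →L[ℂ] H),
        (∀ z w zw : E, (zw : A) = (z : A) * (w : A) → θ zw = θ z * θ w) ∧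
        (∀ z w : E, (w : A) = star (z : A) → θ w = star (θ z)) ∧
        (∀ (x : J) (hx : (x : A) ∈ E), θ ⟨(x : A), hx⟩ = π x)) ↔
      ((∀ x y z : J, (z : A) = (x : A) * (y : A) → π z = π x * π y) ∧
       (∀ x y z w : J, (w : A) = (x : A) * star (y : A) * (z : A) →
          π w = π x * star (π y) * π z))) ∧
    (∀ θ : E →ₗ[ℂ] (H →L[ℂ] H),
      (∀ z w zw : E, (zw : A) = (z : A) * (w : A) → θ zw = θ z * θ w) →
      (∀ z w : E, (w : A) = star (z : A) → θ w = star (θ z)) →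
      (∀ (x : J) (hx : (x : A) ∈ E), θ ⟨(x : A), hx⟩ = π x) →
      ((Function.Injective π ↔ Function.Injective θ) ∧
       (Function.Injective π → ∀ x : J, ‖π x‖ = ‖(x : A)‖))) := by
  subst hE
  refine ⟨⟨?_, ?_⟩, ?_⟩
  · rintro ⟨θ, hmul, hstar, hθ⟩
    have isExtension := isExtension_starAlgHomOfLinearMap (hJ := hJ) hmul hstar hθ
    exact ⟨isExtension.isMultiplicativeOn, isExtension.isTripleMorphism⟩
  · rintro ⟨hmul, htriple⟩
    obtain ⟨θ, hθ⟩ := exists_starAlgHom_extending hJ hmul htriple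
    refine ⟨(θ : A →ₗ[ℂ] (H →L[ℂ] H)) ∘ₗ Submodule.subtype _, ?_, ?_, fun x _ => hθ x⟩
    · rintro z w zw h
      simp [h]
    · rintro z w h
      simp [h, map_star]
  · intro θ hmul hstar hθ
    have isExtension := isExtension_starAlgHomOfLinearMap (hJ := hJ) hmul hstar hθ
    exact ⟨isExtension.injective_iff, isExtension.norm_map⟩

theorem ideal_homomorphism_characterization
    {A : Type*} [NonUnitalCStarAlgebra A]
    {H : Type*} [NormedAddCommGroup H] [InnerProductSpace ℂ H] [CompleteSpace H]
    (J : Submodule ℂ A) (hJc : IsClosed (J : Set A)) (hJ : ∀ a : A, ∀ x ∈ J, a * x ∈ J)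
    (E : Submodule ℂ A)
    (hE : E = (Submodule.span ℂ {z : A | ∃ x ∈ J, ∃ y ∈ J, z = x * star y}).topologicalClosure)
    (π : J →ₗ[ℂ] (H →L[ℂ] H)) :
    -- (a) ↔ (b)
    ((∃ θ : E →ₗ[ℂ] (H →L[ℂ] H),
        (∀ z w zw : E, (zw : A) = (z : A) * (w : A) → θ zw = θ z * θ w) ∧
        (∀ z w : E, (w : A) = star (z : A) → θ w = star (θ z)) ∧
        (∀ (x : J) (hx : (x : A) ∈ E), θ ⟨(x : A), hx⟩ = π x)) ↔
      ((∀ x y z : J, (z : A) = (x : A) * (y : A) → π z = π x * π y) ∧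
       (∀ x y z w : J, (w : A) = (x : A) * star (y : A) * (z : A) →
          π w = π x * star (π y) * π z))) ∧
    -- moreover, for any such θ: π injective ↔ θ injective, and injective → isometric
    (∀ θ : E →ₗ[ℂ] (H →L[ℂ] H),
      (∀ z w zw : E, (zw : A) = (z : A) * (w : A) → θ zw = θ z * θ w) →
      (∀ z w : E, (w : A) = star (z : A) → θ w = star (θ z)) →
      (∀ (x : J) (hx : (x : A) ∈ E), θ ⟨(x : A), hx⟩ = π x) →
      ((Function.Injective π ↔ Function.Injective θ) ∧
       (Function.Injective π → ∀ x : J, ‖π x‖ = ‖(x : A)‖))) :=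
  ideal_homomorphism_characterization_general J hJ E hE π
end
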